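/- For the full shift T on X = ∏_{n∈ℤ} M over a Polish metric space M, the set {μ ∈ M_e : d̲_μ(x) = 0 for μ-a.e. x ∈ X} (equivalently, the set of ergodic invariant measures with Hausdorff dimension dim_H(μ) = 0) is dense in M_e (with the topology induced from the weak topology on M(T)). -/

import Mathlib

open Filter MeasureTheory Topology Metric Set
open scoped ENNReal NNReal

noncomputable section
attribute [local instance] Classical.propDecidable

/-- The full (bilateral) shift on the product space `ℤ → M`: `(T x) i = x (i - 1)`. -/
def fullShift {M : Type*} (x : ℤ → M) : ℤ → M := fun i => x (i - 1)

/-- The metric `d(x,y) = ∑_{n ∈ ℤ} 2^{-|n|} ρ(xₙ,yₙ)/(1 + ρ(xₙ,yₙ))` on `ℤ → M`,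
compatible with the product topology. -/
def shiftDist {M : Type*} [MetricSpace M] (x y : ℤ → M) : ℝ :=
  ∑' n : ℤ, (1 / 2 : ℝ) ^ n.natAbs * (dist (x n) (y n) / (1 + dist (x n) (y n)))

/-- Lower local dimension `d̲_μ(x) = liminf_{ε → 0⁺} log μ(B(x,ε)) / log ε` of `μ` at `x`,
with respect to the distance function `d`; by convention it is `∞` if some ball
centered at `x` has measure zero. -/
def lowerLocalDim {X : Type*} [MeasurableSpace X] (d : X → X → ℝ)
    (μ : Measure X) (x : X) : ℝ≥0∞ :=
  if ∃ ε > 0, μ {y | d x y < ε} = 0 then ⊤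
  else liminf (fun ε : ℝ =>
    ENNReal.ofReal (Real.log (μ {y | d x y < ε}).toReal / Real.log ε)) (𝓝[>] (0 : ℝ))

/-- Upper local dimension `d̄_μ(x) = limsup_{ε → 0⁺} log μ(B(x,ε)) / log ε`. -/
def upperLocalDim {X : Type*} [MeasurableSpace X] (d : X → X → ℝ)
    (μ : Measure X) (x : X) : ℝ≥0∞ :=
  if ∃ ε > 0, μ {y | d x y < ε} = 0 then ⊤
  else limsup (fun ε : ℝ =>
    ENNReal.ofReal (Real.log (μ {y | d x y < ε}).toReal / Real.log ε)) (𝓝[>] (0 : ℝ))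

/-- The ratio `log τ_r(x) / (- log r)`, where `τ_r(x) = inf {n ≥ 1 | Tⁿ x ∈ B̄(x,r)}` is the
first return time of `x` to the closed ball `B̄(x,r)`; by convention it is `∞` when the
return time is infinite. -/
def recRatio {X : Type*} (d : X → X → ℝ) (T : X → X) (x : X) (r : ℝ) : ℝ≥0∞ :=
  if ∃ n : ℕ, 1 ≤ n ∧ d (T^[n] x) x ≤ r then
    ENNReal.ofReal
      (Real.log ((sInf {n : ℕ | 1 ≤ n ∧ d (T^[n] x) x ≤ r} : ℕ) : ℝ) / (- Real.log r))
  else ⊤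

/-- Lower recurrence rate `R̲(x) = liminf_{r → 0⁺} log τ_r(x) / (- log r)`. -/
def lowerRecRate {X : Type*} (d : X → X → ℝ) (T : X → X) (x : X) : ℝ≥0∞ :=
  liminf (recRatio d T x) (𝓝[>] (0 : ℝ))

/-- Upper recurrence rate `R̄(x) = limsup_{r → 0⁺} log τ_r(x) / (- log r)`. -/
def upperRecRate {X : Type*} (d : X → X → ℝ) (T : X → X) (x : X) : ℝ≥0∞ :=
  limsup (recRatio d T x) (𝓝[>] (0 : ℝ))

/-- The ratio `log τ_r(x,y) / (- log r)`, where `τ_r(x,y) = inf {n ≥ 1 | Tⁿ x ∈ B̄(y,r)}` is the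
first entrance time of the orbit of `x` into the closed ball `B̄(y,r)`; by convention `∞`
when the entrance time is infinite. -/
def waitRatio {X : Type*} (d : X → X → ℝ) (T : X → X) (x y : X) (r : ℝ) : ℝ≥0∞ :=
  if ∃ n : ℕ, 1 ≤ n ∧ d (T^[n] x) y ≤ r then
    ENNReal.ofReal
      (Real.log ((sInf {n : ℕ | 1 ≤ n ∧ d (T^[n] x) y ≤ r} : ℕ) : ℝ) / (- Real.log r))
  else ⊤

/-- Lower quantitative waiting time indicator `R̲(x,y)`. -/
def lowerWaitRate {X : Type*} (d : X → X → ℝ) (T : X → X) (x y : X) : ℝ≥0∞ :=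
  liminf (waitRatio d T x y) (𝓝[>] (0 : ℝ))

/-- Upper quantitative waiting time indicator `R̄(x,y)`. -/
def upperWaitRate {X : Type*} (d : X → X → ℝ) (T : X → X) (x y : X) : ℝ≥0∞ :=
  limsup (waitRatio d T x y) (𝓝[>] (0 : ℝ))

/-- The entropy `H(P) = ∑_c -μ(P_c) log μ(P_c)` of the finite measurable partition
`P_c = f ⁻¹ {c}` of `X` induced by a map `f` into a finite set. -/
def partitionEntropy {X F : Type*} [MeasurableSpace X] [Fintype F]
    (μ : Measure X) (f : X → F) : ℝ :=
  ∑ c : F, Real.negMulLog ((μ (f ⁻¹' {c})).toReal)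

/-- The Kolmogorov–Sinai (measure-theoretic) entropy `h_μ(T)`: the supremum, over all finite
measurable partitions (coded by measurable maps `f : X → Fin k`), of the limit of
`H(⋁_{i<n} T⁻ⁱ P) / n`. -/
def kolmogorovSinaiEntropy {X : Type*} [MeasurableSpace X] (T : X → X) (μ : Measure X) :
    ℝ≥0∞ :=
  ⨆ (k : ℕ) (f : X → Fin k) (_ : Measurable f),
    ENNReal.ofReal
      (liminf (fun n : ℕ =>
        partitionEntropy μ (fun x (i : Fin n) => f (T^[(i : ℕ)] x)) / n) atTop)

end

/-!
By the mean ergodic theorem, an ergodic `μ` admits points `x` whose Birkhoff averages of finitely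
many given cylinder indicators are close to the `μ`-measures of the cylinders. Repeating a window
of length `N` of such an `x` periodically changes each Birkhoff sum only through a number of
boundary terms that does not depend on `N`. Cylinders determine the weak topology, so the uniform
measure on the resulting periodic orbit is close to `μ`; it is ergodic, and purely atomic, hence of
local dimension zero almost everywhere.
-/

section MeanErgodic

variable {X E : Type*} [MeasurableSpace X] {T : X → X} {μ : Measure X}

theorem coeFn_birkhoffAverage_compMeasurePreserving [NormedAddCommGroup E] [NormedSpace ℝ E]
    {p : ℝ≥0∞} (hT : MeasurePreserving T μ μ) (N : ℕ) (g : Lp E p μ) :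
    (birkhoffAverage ℝ (Lp.compMeasurePreserving T hT) id N g : Lp E p μ)
      =ᵐ[μ] birkhoffAverage ℝ T g N := by
  have hiterate : ∀ j, ((Lp.compMeasurePreserving T hT)^[j] g : Lp E p μ) =ᵐ[μ] g ∘ T^[j] := by
    intro j
    rw [Lp.compMeasurePreserving_iterate]
    exact Lp.coeFn_compMeasurePreserving g (hT.iterate j)
  filter_upwards [Lp.coeFn_smul (N : ℝ)⁻¹
      (birkhoffSum (Lp.compMeasurePreserving T hT) id N g),
    Lp.coeFn_fun_finsetSum (Finset.range N) (fun j => (Lp.compMeasurePreserving T hT)^[j] g),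
    ae_all_iff.2 hiterate] with x hsmul hsum hiterate_x
  refine hsmul.trans (congrArg ((N : ℝ)⁻¹ • ·) (hsum.trans ?_))
  exact Finset.sum_congr rfl fun j _ => hiterate_x j

variable [NormedAddCommGroup E] [InnerProductSpace ℝ E] [CompleteSpace E] [IsProbabilityMeasure μ]

theorem starProjection_eqLocus_compMeasurePreserving_of_ergodic (hT : Ergodic T μ)
    (g : Lp E 2 μ) :
    ((Lp.compMeasurePreservingₗᵢ ℝ T hT.toMeasurePreserving).toContinuousLinearMap.eqLocus
      (1 : Lp E 2 μ →L[ℝ] Lp E 2 μ)).starProjection g = Lp.const 2 μ (∫ x, g x ∂μ) := by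
  apply Submodule.eq_starProjection_of_mem_orthogonal
  · refine Lp.ext ((Lp.coeFn_compMeasurePreserving _ hT.toMeasurePreserving).trans ?_)
    have hconst := Lp.coeFn_const 2 μ (∫ x, g x ∂μ)
    exact (hT.quasiMeasurePreserving.ae_eq_comp hconst).trans hconst.symm
  · refine (Submodule.mem_orthogonal _ _).2 fun h hh => ?_
    have hinvariant : h ∘ T =ᵐ[μ] h := by
      have := Lp.coeFn_compMeasurePreserving h hT.toMeasurePreserving
      exact this.symm.trans (congrArg (fun u : Lp E 2 μ => ⇑u) hh).eventuallyEq
    obtain ⟨c, hc⟩ := hT.ae_eq_const_of_ae_eq_comp_ae (Lp.aestronglyMeasurable h) hinvariant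
    have hg : Integrable g μ := (Lp.memLp g).integrable one_le_two
    have hinner : (fun x => inner ℝ (h x) ((g - Lp.const 2 μ (∫ x, g x ∂μ) : Lp E 2 μ) x))
        =ᵐ[μ] fun x => inner ℝ c (g x - ∫ x, g x ∂μ) := by
      filter_upwards [hc, Lp.coeFn_sub g (Lp.const 2 μ (∫ x, g x ∂μ)),
        Lp.coeFn_const 2 μ (∫ x, g x ∂μ)] with x hx hsub hconst
      simp only [hx, hsub, hconst, Pi.sub_apply, Function.const_apply]
    rw [L2.inner_def, integral_congr_ae hinner,
      integral_inner (f := fun x => g x - ∫ x, g x ∂μ) (hg.sub (integrable_const _)) c,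
      integral_sub hg (integrable_const _), integral_const, probReal_univ, one_smul, sub_self,
      inner_zero_right]

theorem tendstoInMeasure_birkhoffAverage_of_ergodic (hT : Ergodic T μ) {f : X → E}
    (hf : MemLp f 2 μ) :
    TendstoInMeasure μ (birkhoffAverage ℝ T f) atTop fun _ => ∫ x, f x ∂μ := by
  let U := (Lp.compMeasurePreservingₗᵢ (E := E) (p := 2) ℝ T
    hT.toMeasurePreserving).toContinuousLinearMap
  have hmean := U.tendsto_birkhoffAverage_orthogonalProjection
    (LinearIsometry.norm_toContinuousLinearMap_le _) (hf.toLp f)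
  rw [← Submodule.starProjection_apply,
    starProjection_eqLocus_compMeasurePreserving_of_ergodic hT] at hmean
  refine (tendstoInMeasure_of_tendsto_Lp hmean).congr (fun N => ?_) ?_
  · exact (coeFn_birkhoffAverage_compMeasurePreserving _ N _).trans
      (hT.quasiMeasurePreserving.birkhoffAverage_ae_eq_of_ae_eq ℝ hf.coeFn_toLp N)
  · rw [integral_congr_ae hf.coeFn_toLp]
    exact Lp.coeFn_const 2 μ _

end MeanErgodic

section ConvergenceInMeasure

variable {X E κ : Type*} [MeasurableSpace X] {μ : Measure X} {l : Filter κ}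

theorem tendstoInMeasure_of_dist_le [PseudoMetricSpace E] {F G : κ → X → E} {g : X → E}
    (hF : TendstoInMeasure μ F l g) {a : κ → ℝ} (ha : Tendsto a l (𝓝 0))
    (hFG : ∀ n x, dist (F n x) (G n x) ≤ a n) : TendstoInMeasure μ G l g := by
  rw [tendstoInMeasure_iff_dist] at hF ⊢
  intro ε hε
  refine tendsto_of_tendsto_of_tendsto_of_le_of_le' tendsto_const_nhds (hF (ε / 2) (half_pos hε))
    (.of_forall fun _ => zero_le) ?_
  filter_upwards [ha.eventually_lt_const (half_pos hε)] with n hn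
  refine measure_mono fun x (hx : ε ≤ dist (G n x) (g x)) => ?_
  have htriangle := dist_triangle_left (G n x) (g x) (F n x)
  have hclose := hFG n x
  exact show ε / 2 ≤ dist (F n x) (g x) by linarith

theorem tendsto_measure_notMem_of_tendstoInMeasure [PseudoEMetricSpace E] {F : κ → X → E} {c : E}
    (hF : TendstoInMeasure μ F l fun _ => c) {U : Set E} (hU : U ∈ 𝓝 c) :
    Tendsto (fun n => μ {x | F n x ∉ U}) l (𝓝 0) := by
  obtain ⟨ε, hε, hball⟩ := EMetric.mem_nhds_iff.1 hU
  refine tendsto_of_tendsto_of_tendsto_of_le_of_le tendsto_const_nhds (hF ε hε)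
    (fun _ => zero_le) fun n => measure_mono fun x hx => ?_
  exact not_lt.1 fun hlt => hx (hball (mem_eball.2 hlt))

theorem eventually_exists_mem_of_tendstoInMeasure {ι : Type*} [PseudoEMetricSpace E] [NeZero μ]
    {F : ι → κ → X → E} {c : ι → E} (hF : ∀ i, TendstoInMeasure μ (F i) l fun _ => c i)
    {U : Set (ι → E)} (hU : U ∈ 𝓝 c) : ∀ᶠ n in l, ∃ x, (fun i => F i n x) ∈ U := by
  rw [nhds_pi] at hU
  obtain ⟨I, hI, V, hV, hVU⟩ := Filter.mem_pi.1 hU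
  have hbad : Tendsto (fun n => ∑ i ∈ hI.toFinset, μ {x | F i n x ∉ V i}) l (𝓝 0) := by
    simpa only [Finset.sum_const_zero] using tendsto_finsetSum hI.toFinset fun i _ =>
      tendsto_measure_notMem_of_tendstoInMeasure (hF i) (hV i)
  filter_upwards [hbad.eventually_lt_const (Measure.measure_univ_pos.2 (NeZero.ne μ))] with n hn
  have hunion : ⋃ i ∈ hI.toFinset, {x | F i n x ∉ V i} ≠ univ := fun heq =>
    ((measure_biUnion_finset_le _ _).trans_lt hn).ne (congrArg μ heq)
  obtain ⟨x, hx⟩ := (ne_univ_iff_exists_notMem _).1 hunion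
  simp only [Finite.mem_toFinset, mem_iUnion, mem_ofPred_eq, exists_prop, not_exists, not_and,
    not_not] at hx
  exact ⟨x, hVU hx⟩

end ConvergenceInMeasure

section WeakTopology

theorem mem_closure_of_measureReal_mem_closure {Ω : Type*} [TopologicalSpace Ω]
    [SecondCountableTopology Ω] [MeasurableSpace Ω] [OpensMeasurableSpace Ω] {S : Set (Set Ω)}
    (hS : IsPiSystem S) (hcount : S.Countable) (hmeas : ∀ s ∈ S, MeasurableSet s)
    (hnhds : ∀ u, IsOpen u → ∀ x ∈ u, ∃ s ∈ S, s ∈ 𝓝 x ∧ s ⊆ u)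
    {D : Set (ProbabilityMeasure Ω)} {ν : ProbabilityMeasure Ω}
    (hν : (fun s : S => ν.toMeasure.real s) ∈
      closure ((fun (μ : ProbabilityMeasure Ω) (s : S) => μ.toMeasure.real s) '' D)) :
    ν ∈ closure D := by
  have : Countable S := hcount.to_subtype
  obtain ⟨v, hv, hlim⟩ := mem_closure_iff_seq_limit.1 hν
  choose μ hμD hμv using hv
  refine mem_closure_of_tendsto ?_ (.of_forall hμD : ∀ᶠ n in atTop, μ n ∈ D)
  refine hS.tendsto_probabilityMeasure_of_tendsto_of_mem hmeas hnhds fun s hs => ?_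
  have hs_lim := tendsto_pi_nhds.1 hlim ⟨s, hs⟩
  simp only [← hμv] at hs_lim
  exact NNReal.tendsto_coe.1 hs_lim

theorem exists_countable_isPiSystem_subset_measurableCylinders {ι : Type*} [Countable ι]
    (α : ι → Type*) [∀ i, TopologicalSpace (α i)] [∀ i, SecondCountableTopology (α i)]
    [∀ i, MeasurableSpace (α i)] [∀ i, OpensMeasurableSpace (α i)] :
    ∃ S ⊆ measurableCylinders α, S.Countable ∧ IsPiSystem S ∧
      ∀ u, IsOpen u → ∀ x ∈ u, ∃ s ∈ S, s ∈ 𝓝 x ∧ s ⊆ u := by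
  have hbasis := isTopologicalBasis_pi fun i =>
    TopologicalSpace.isTopologicalBasis_opens (α := α i)
  obtain ⟨B, hB_sub, hB_count, hB⟩ := hbasis.exists_countable
  have hB_cyl : B ⊆ measurableCylinders α := fun s hs => by
    obtain ⟨U, F, hU, rfl⟩ := hB_sub hs
    refine (mem_measurableCylinders _).2 ⟨F, univ.pi fun i : F => U i,
      .univ_pi fun i => (hU i i.2).measurableSet, ?_⟩
    ext x
    simp [Set.mem_pi]
  refine ⟨generateSetAlgebra B,
    isSetAlgebra_measurableCylinders.generateSetAlgebra_subset hB_cyl,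
    countable_generateSetAlgebra hB_count,
    fun s hs t ht _ => isSetAlgebra_generateSetAlgebra.inter_mem hs ht, fun u hu x hx => ?_⟩
  obtain ⟨s, hs, hxs, hsu⟩ := hB.exists_subset_of_mem_open hx hu
  exact ⟨s, self_subset_generateSetAlgebra hs, (hB.isOpen hs).mem_nhds hxs, hsu⟩

end WeakTopology

theorem birkhoffSum_apply_of_isPeriodicPt {α M : Type*} [AddCommMonoid M] {f : α → α} {n : ℕ}
    {x : α} (hx : Function.IsPeriodicPt f n x) (g : α → M) :
    birkhoffSum f g n (f x) = birkhoffSum f g n x := by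
  cases n with
  | zero => rfl
  | succ n =>
    rw [birkhoffSum_succ, birkhoffSum_succ', ← Function.iterate_succ_apply, hx.eq, add_comm]

section EmpiricalMeasure

variable {X : Type*} [MeasurableSpace X] {T : X → X} {N : ℕ} {p : X}

/-- The empirical measure `(δ_p + δ_{T p} + ⋯ + δ_{T^(N-1) p}) / N` of an orbit segment of length
`N`, which is the zero measure for `N = 0`. -/
noncomputable def empiricalMeasure (T : X → X) (N : ℕ) (p : X) : Measure X :=
  birkhoffAverage ℝ≥0 T Measure.dirac N p

theorem ae_empiricalMeasure_iff {P : X → Prop} :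
    (∀ᵐ x ∂empiricalMeasure T N p, P x) ↔ ∀ j < N, ∀ᵐ x ∂Measure.dirac (T^[j] p), P x := by
  rcases eq_or_ne N 0 with rfl | hN
  · simp [empiricalMeasure]
  · have hinv : (N : ℝ≥0)⁻¹ ≠ 0 := inv_ne_zero (Nat.cast_ne_zero.2 hN)
    simp only [empiricalMeasure, birkhoffAverage, birkhoffSum, Measure.ae_smul_measure_iff hinv,
      ae_finsetSum_measure_iff, Finset.mem_range]

theorem ae_empiricalMeasure_singleton_ne_zero [MeasurableSingletonClass X] :
    ∀ᵐ x ∂empiricalMeasure T N p, empiricalMeasure T N p {x} ≠ 0 := by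
  simp only [ae_empiricalMeasure_iff, ae_dirac_eq, eventually_pure]
  intro j hj hzero
  have hne : ∀ᵐ x ∂empiricalMeasure T N p, x ≠ T^[j] p := measure_eq_zero_iff_ae_notMem.1 hzero
  simp only [ae_empiricalMeasure_iff, ae_dirac_eq, eventually_pure] at hne
  exact hne j hj rfl

theorem measureReal_empiricalMeasure {A : Set X} (hA : MeasurableSet A) :
    (empiricalMeasure T N p).real A = birkhoffAverage ℝ T (A.indicator 1) N p := by
  have hdirac (y : X) : (Measure.dirac y A).toReal = A.indicator 1 y := by
    rw [Measure.dirac_apply' y hA]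
    by_cases hy : y ∈ A <;> simp [hy]
  rw [empiricalMeasure, birkhoffAverage, measureReal_nnreal_smul_apply, measureReal_def,
    birkhoffSum, Measure.finsetSum_apply, ENNReal.toReal_sum fun j _ => measure_ne_top _ _]
  simp only [hdirac, birkhoffAverage, birkhoffSum, NNReal.coe_inv, NNReal.coe_natCast, smul_eq_mul]

theorem isProbabilityMeasure_empiricalMeasure (hN : N ≠ 0) :
    IsProbabilityMeasure (empiricalMeasure T N p) := by
  rw [isProbabilityMeasure_iff_real, measureReal_empiricalMeasure .univ, indicator_univ,
    birkhoffAverage_of_comp_eq ℝ rfl (Nat.cast_ne_zero.2 hN), Pi.one_apply]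

theorem map_empiricalMeasure (hT : Measurable T) :
    (empiricalMeasure T N p).map T = empiricalMeasure T N (T p) := by
  simp only [empiricalMeasure, birkhoffAverage, birkhoffSum, Measure.map_smul,
    Measure.map_finset_sum hT.aemeasurable, Measure.map_dirac' hT, ← Function.iterate_succ_apply,
    Function.iterate_succ_apply']

theorem ergodic_empiricalMeasure (hT : Measurable T) (hp : Function.IsPeriodicPt T N p) :
    Ergodic T (empiricalMeasure T N p) := by
  refine ⟨⟨hT, ?_⟩, ⟨fun s hs hTs => ?_⟩⟩
  · rw [map_empiricalMeasure hT, empiricalMeasure, birkhoffAverage,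
      birkhoffSum_apply_of_isPeriodicPt hp]
    rfl
  · have horbit (j : ℕ) : T^[j] p ∈ s ↔ p ∈ s := by
      rw [← mem_preimage, Function.IsFixedPt.preimage_iterate hTs j]
    rw [eventuallyConst_set, ae_empiricalMeasure_iff, ae_empiricalMeasure_iff]
    by_cases hps : p ∈ s
    · exact .inl fun j _ => (ae_dirac_iff hs).2 ((horbit j).2 hps)
    · exact .inr fun j _ => (ae_dirac_iff hs.compl).2 (hps ∘ (horbit j).1)

end EmpiricalMeasure

theorem upperLocalDim_eq_zero_of_measure_singleton_ne_zero {X : Type*} [MeasurableSpace X]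
    {d : X → X → ℝ} {μ : Measure X} [IsFiniteMeasure μ] {x : X} (hd : d x x = 0)
    (hx : μ {x} ≠ 0) : upperLocalDim d μ x = 0 := by
  have hle : ∀ ε > 0, μ {x} ≤ μ {y | d x y < ε} := fun ε hε =>
    measure_mono (singleton_subset_iff.2 (hd.trans_lt hε))
  have hball : ¬∃ ε > 0, μ {y | d x y < ε} = 0 := fun ⟨ε, hε, hzero⟩ =>
    hx (le_zero_iff.1 (hzero ▸ hle ε hε))
  rw [upperLocalDim, if_neg hball]
  have hatom : Tendsto (fun ε : ℝ => ENNReal.ofReal (Real.log (μ {x}).toReal / Real.log ε))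
      (𝓝[>] 0) (𝓝 0) :=
    ENNReal.ofReal_zero ▸
      ENNReal.tendsto_ofReal (Real.tendsto_log_nhdsGT_zero.const_div_atBot _)
  refine (tendsto_of_tendsto_of_tendsto_of_le_of_le' tendsto_const_nhds hatom
    (.of_forall fun _ => zero_le) ?_).limsup_eq
  filter_upwards [Ioo_mem_nhdsGT one_pos] with ε ⟨hε, hε_one⟩
  refine ENNReal.ofReal_le_ofReal (div_le_div_of_nonpos_of_le (Real.log_nonpos hε.le hε_one.le) ?_)
  exact Real.log_le_log (ENNReal.toReal_pos hx (measure_ne_top _ _))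
    (ENNReal.toReal_mono (measure_ne_top _ _) (hle ε hε))

theorem lowerLocalDim_le_upperLocalDim {X : Type*} [MeasurableSpace X] (d : X → X → ℝ)
    (μ : Measure X) (x : X) : lowerLocalDim d μ x ≤ upperLocalDim d μ x := by
  rw [lowerLocalDim, upperLocalDim]
  split_ifs
  · exact le_rfl
  · exact liminf_le_limsup

section FullShift

variable {M : Type*}

theorem fullShift_iterate_apply (j : ℕ) (x : ℤ → M) (i : ℤ) : fullShift^[j] x i = x (i - j) := by
  induction j generalizing i with
  | zero => simp
  | succ j ih =>
    rw [Function.iterate_succ_apply', fullShift, ih, Nat.cast_succ, sub_sub, add_comm (1 : ℤ)]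

theorem measurable_fullShift [MeasurableSpace M] : Measurable (fullShift (M := M)) :=
  measurable_pi_lambda _ fun i => measurable_pi_apply (i - 1)

/-- The `N`-periodic point of the full shift that agrees with `x` on `(-N, 0]`. As
`fullShift^[j] x i = x (i - j)`, this is the window of `x` that the first `N` iterates see around
coordinate `0`. For `N = 0` the point is `x` itself. -/
def periodize (N : ℕ) (x : ℤ → M) : ℤ → M := fun i => x (-(-i % N))

theorem isPeriodicPt_periodize (N : ℕ) (x : ℤ → M) :
    Function.IsPeriodicPt fullShift N (periodize N x) := by
  funext i
  rw [fullShift_iterate_apply, periodize, periodize, neg_sub', sub_neg_eq_add, Int.add_emod_right]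

theorem fullShift_iterate_periodize_apply {N k j : ℕ} (x : ℤ → M) (hkj : k ≤ j) (hjN : j + k < N)
    {i : ℤ} (hi : i ∈ Icc (-k : ℤ) k) :
    fullShift^[j] (periodize N x) i = fullShift^[j] x i := by
  obtain ⟨hki, hik⟩ := hi
  rw [fullShift_iterate_apply, fullShift_iterate_apply, periodize,
    Int.emod_eq_of_lt (by lia) (by lia), neg_neg]

section Birkhoff

variable {E : Type*} [NormedAddCommGroup E] {f : (ℤ → M) → E} {C : ℝ} {k : ℕ}

theorem dist_birkhoffSum_periodize_le (hf : DependsOn f (Icc (-k : ℤ) k))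
    (hC : ∀ x y, dist (f x) (f y) ≤ C) (N : ℕ) (x : ℤ → M) :
    dist (birkhoffSum fullShift f N x) (birkhoffSum fullShift f N (periodize N x)) ≤
      2 * k * C := by
  have hC_nonneg : 0 ≤ C := dist_nonneg.trans (hC x x)
  let δ (j : ℕ) : ℝ := dist (f (fullShift^[j] x)) (f (fullShift^[j] (periodize N x)))
  have hsupport : (Finset.range N).filter (δ · ≠ 0) ⊆ Finset.range k ∪ Finset.Ico (N - k) N := by
    intro j hj
    obtain ⟨hjN, hδ⟩ := Finset.mem_filter.1 hj
    have hboundary : ¬(k ≤ j ∧ j + k < N) := fun ⟨hkj, hjk⟩ => hδ <| dist_eq_zero.2 <|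
      hf fun i hi => (fullShift_iterate_periodize_apply x hkj hjk hi).symm
    simp only [Finset.mem_union, Finset.mem_range, Finset.mem_Ico] at hjN ⊢
    lia
  have hcard : ((Finset.range N).filter (δ · ≠ 0)).card ≤ 2 * k := by
    refine (Finset.card_le_card hsupport).trans ((Finset.card_union_le _ _).trans ?_)
    rw [Finset.card_range, Nat.card_Ico]
    lia
  calc dist (birkhoffSum fullShift f N x) (birkhoffSum fullShift f N (periodize N x))
      ≤ ∑ j ∈ Finset.range N, δ j := dist_birkhoffSum_birkhoffSum_le _ _ _ _ _
    _ = ∑ j ∈ (Finset.range N).filter (δ · ≠ 0), δ j := (Finset.sum_filter_ne_zero _).symm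
    _ ≤ ((Finset.range N).filter (δ · ≠ 0)).card • C :=
      Finset.sum_le_card_nsmul _ _ _ fun j _ => hC _ _
    _ ≤ (2 * k) • C := nsmul_le_nsmul_left hC_nonneg hcard
    _ = 2 * k * C := by rw [nsmul_eq_mul, Nat.cast_mul, Nat.cast_ofNat]

end Birkhoff

variable [MeasurableSpace M]

theorem tendstoInMeasure_measureReal_empiricalMeasure_periodize {μ : Measure (ℤ → M)}
    [IsProbabilityMeasure μ] (hμ : Ergodic fullShift μ) {A : Set (ℤ → M)}
    (hA : A ∈ measurableCylinders fun _ : ℤ => M) :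
    TendstoInMeasure μ (fun N x => (empiricalMeasure fullShift N (periodize N x)).real A) atTop
      fun _ => μ.real A := by
  have hA_meas : MeasurableSet A := .of_mem_measurableCylinders hA
  obtain ⟨I, S, -, hA_eq⟩ := (mem_measurableCylinders A).1 hA
  let f : (ℤ → M) → ℝ := A.indicator 1
  let k := I.sup Int.natAbs
  have hf_depends : DependsOn f (Icc (-k : ℤ) k) := by
    have hI : (I : Set ℤ) ⊆ Icc (-k : ℤ) k := fun i hi => by
      have hik : i.natAbs ≤ k := Finset.le_sup (f := Int.natAbs) hi
      exact ⟨by lia, by lia⟩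
    have hf : DependsOn f I := by
      rw [show f = (cylinder I S).indicator fun _ => 1 from hA_eq ▸ rfl]
      exact dependsOn_cylinder_indicator_const (α := fun _ : ℤ => M) S 1
    exact hf.mono hI
  have hf_mem (x : ℤ → M) : f x ∈ Icc (0 : ℝ) 1 :=
    ⟨indicator_nonneg (fun _ _ => zero_le_one) x, indicator_le_self' (fun _ _ => zero_le_one) x⟩
  have hf_dist (x y : ℤ → M) : dist (f x) (f y) ≤ 1 :=
    Real.dist_le_of_mem_Icc_01 (hf_mem x) (hf_mem y)
  have hf_memLp : MemLp f 2 μ := memLp_indicator_const 2 hA_meas 1 (.inr (measure_ne_top _ _))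
  have hmean := tendstoInMeasure_birkhoffAverage_of_ergodic hμ hf_memLp
  simp only [f, integral_indicator_one hA_meas] at hmean
  refine tendstoInMeasure_of_dist_le hmean
    (tendsto_const_div_atTop_nhds_zero_nat (2 * k * 1 : ℝ)) fun N x => ?_
  rw [measureReal_empiricalMeasure hA_meas, dist_birkhoffAverage_birkhoffAverage]
  gcongr
  exact dist_birkhoffSum_periodize_le hf_depends hf_dist N x

variable [TopologicalSpace M] [SecondCountableTopology M] [OpensMeasurableSpace M]

theorem mem_closure_empiricalMeasure_of_ergodic_fullShift {ν : ProbabilityMeasure (ℤ → M)}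
    (hν : Ergodic fullShift ν.toMeasure) :
    ν ∈ closure {μ : ProbabilityMeasure (ℤ → M) | ∃ N p, Function.IsPeriodicPt fullShift N p ∧
      μ.toMeasure = empiricalMeasure fullShift N p} := by
  obtain ⟨S, hS_cyl, hS_count, hS_pi, hS_nhds⟩ :=
    exists_countable_isPiSystem_subset_measurableCylinders fun _ : ℤ => M
  refine mem_closure_of_measureReal_mem_closure hS_pi hS_count
    (fun s hs => .of_mem_measurableCylinders (hS_cyl hs)) hS_nhds
    (mem_closure_iff_nhds.2 fun U hU => ?_)
  obtain ⟨N, ⟨x, hx⟩, hN⟩ := ((eventually_exists_mem_of_tendstoInMeasure (fun s : S =>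
    tendstoInMeasure_measureReal_empiricalMeasure_periodize hν (hS_cyl s.2)) hU).and
    (eventually_ne_atTop 0)).exists
  exact ⟨_, hx, ⟨_, isProbabilityMeasure_empiricalMeasure hN⟩,
    ⟨N, periodize N x, isPeriodicPt_periodize N x, rfl⟩, rfl⟩

theorem fullShift_hausdorffDimZero_dense_in_ergodic_general [MeasurableSingletonClass M]
    {d : (ℤ → M) → (ℤ → M) → ℝ} (hd : ∀ x, d x x = 0) :
    Dense {μ : {ν : ProbabilityMeasure (ℤ → M) // Ergodic fullShift ν.toMeasure} |
        ∀ᵐ x ∂μ.1.toMeasure, upperLocalDim d μ.1.toMeasure x = 0} := by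
  refine Subtype.dense_iff.2 fun ν hν =>
    closure_mono ?_ (mem_closure_empiricalMeasure_of_ergodic_fullShift hν)
  rintro μ ⟨N, p, hp, hμ⟩
  have hμ_ergodic : Ergodic fullShift μ.toMeasure :=
    hμ ▸ ergodic_empiricalMeasure measurable_fullShift hp
  have hμ_atoms : ∀ᵐ x ∂μ.toMeasure, μ.toMeasure {x} ≠ 0 :=
    hμ ▸ ae_empiricalMeasure_singleton_ne_zero
  exact ⟨⟨μ, hμ_ergodic⟩, hμ_atoms.mono fun x hx =>
    upperLocalDim_eq_zero_of_measure_singleton_ne_zero (hd x) hx, rfl⟩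

end FullShift

/-- For the full shift on `ℤ → M` over a Polish metric space `M`, the set
of ergodic invariant measures whose lower local dimension vanishes almost everywhere
(i.e. with Hausdorff dimension zero) is dense in `M_e`. -/
theorem fullShift_hausdorffDimZero_dense_in_ergodic {M : Type*} [MetricSpace M]
    [CompleteSpace M] [TopologicalSpace.SeparableSpace M]
    [MeasurableSpace M] [BorelSpace M] :
    Dense {μ : {ν : ProbabilityMeasure (ℤ → M) // Ergodic fullShift ν.toMeasure} |
        ∀ᵐ x ∂μ.1.toMeasure, lowerLocalDim shiftDist μ.1.toMeasure x = 0} := by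
  have hself (x : ℤ → M) : shiftDist x x = 0 := by simp [shiftDist]
  refine (fullShift_hausdorffDimZero_dense_in_ergodic_general hself).mono fun μ hμ => ?_
  rw [mem_ofPred_eq] at hμ ⊢
  filter_upwards [hμ] with x hx
  exact le_zero_iff.1 ((lowerLocalDim_le_upperLocalDim shiftDist _ x).trans_eq hx)
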